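/- Let H = Σᵢ(ωᵢuᵢ + xuᵢ²) + x³/3 + xy² + Σⱼ(pⱼ³/3 + pⱼqⱼ²), and Fⱼ = pⱼ³/3 + pⱼqⱼ² on ℝ^{n+2m+2} × 𝕋ⁿ. At every point at which (u, x, y) ≠ 0 in ℝ^{n+2} and (pⱼ, qⱼ) ≠ (0, 0) for every 1 ≤ j ≤ m, the differentials of the n + m + 1 functions H, u₁, …, uₙ, F₁, …, Fₘ are linearly independent. In particular, these first integrals are functionally independent almost everywhere (the exceptional set has Lebesgue measure zero). -/

import Mathlib

open Real

/-- The phase space ℳ = ℝ^{n+2m+2} × 𝕋ⁿ, represented with coordinates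
`(u, x, y, p, q, φ)` (the angles φ by their real lifts). -/
abbrev PhaseSpace (n m : ℕ) :=
  (Fin n → ℝ) × ℝ × ℝ × (Fin m → ℝ) × (Fin m → ℝ) × (Fin n → ℝ)

/-- The family of n + m + 1 first integrals
`H = Σᵢ(ωᵢuᵢ + xuᵢ²) + x³/3 + xy² + Σⱼ(pⱼ³/3 + pⱼqⱼ²)`, `uᵢ` (1 ≤ i ≤ n),
`Fⱼ = pⱼ³/3 + pⱼqⱼ²` (1 ≤ j ≤ m), as functions on ℳ. -/
noncomputable def integralFamily (n m : ℕ) (ω : Fin n → ℝ) :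
    Unit ⊕ Fin n ⊕ Fin m → PhaseSpace n m → ℝ
  | Sum.inl _ => fun z =>
      (∑ i, (ω i * z.1 i + z.2.1 * (z.1 i) ^ 2)) + z.2.1 ^ 3 / 3
        + z.2.1 * z.2.2.1 ^ 2
        + ∑ j, ((z.2.2.2.1 j) ^ 3 / 3 + z.2.2.2.1 j * (z.2.2.2.2.1 j) ^ 2)
  | Sum.inr (Sum.inl i) => fun z => z.1 i
  | Sum.inr (Sum.inr j) => fun z =>
      (z.2.2.2.1 j) ^ 3 / 3 + z.2.2.2.1 j * (z.2.2.2.2.1 j) ^ 2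

/-!
Both `H` and the `Fⱼ` have a definite partial derivative: `∂H/∂x = |u|² + x² + y²` and
`∂Fⱼ/∂pⱼ = pⱼ² + qⱼ²`. Pairing the differentials with the directions `∂/∂x`, `∂/∂uᵢ`, `∂/∂pⱼ` gives
a triangular matrix, because `uᵢ` and `Fⱼ` depend on none of these coordinates except `uᵢ` and `pⱼ`
respectively, and its diagonal entries `|u|² + x² + y²`, `1`, `pⱼ² + qⱼ²` do not vanish. The
exceptional set lies in the union of the hyperplanes `x = 0` and `pⱼ = 0`.
-/

theorem linearIndependent_of_dual_triangular {ι α R M : Type*} [CommRing R] [NoZeroDivisors R]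
    [AddCommGroup M] [Module R M] [LinearOrder α] (rank : ι → α) (v : ι → M)
    (f : ι → Module.Dual R M) (h_diag : ∀ i, f i (v i) ≠ 0)
    (h_tri : ∀ i j, i ≠ j → rank i ≤ rank j → f i (v j) = 0) :
    LinearIndependent R v := by
  rw [linearIndependent_iff]
  intro c hc
  by_contra hc_ne
  obtain ⟨i, hi, hi_min⟩ := c.support.exists_min_image rank (Finsupp.support_nonempty_iff.mpr hc_ne)
  have h_single : ∑ j ∈ c.support, c j * f i (v j) = c i * f i (v i) :=
    Finset.sum_eq_single_of_mem i hi fun j hj hji => by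
      rw [h_tri i j hji.symm (hi_min j hj), mul_zero]
  have h_pair : ∑ j ∈ c.support, c j * f i (v j) = 0 := by
    simpa [Finsupp.linearCombination_apply, Finsupp.sum] using congrArg (f i) hc
  exact mul_ne_zero (Finsupp.mem_support_iff.mp hi) (h_diag i) (h_single.symm.trans h_pair)

theorem sum_sq_eq_zero_iff {ι R : Type*} [Fintype ι] [Ring R] [LinearOrder R]
    [IsStrictOrderedRing R] {v : ι → R} : ∑ i, v i ^ 2 = 0 ↔ v = 0 := by
  simpa only [dotProduct, sq] using dotProduct_self_eq_zero (v := v)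

theorem sq_add_sq_eq_zero_iff {R : Type*} [Ring R] [LinearOrder R] [IsStrictOrderedRing R]
    {a b : R} : a ^ 2 + b ^ 2 = 0 ↔ a = 0 ∧ b = 0 := by
  rw [add_eq_zero_iff_of_nonneg (sq_nonneg a) (sq_nonneg b), sq_eq_zero_iff, sq_eq_zero_iff]

theorem hasFDerivAt_cube_div_three_add_mul_sq {E : Type*} [NormedAddCommGroup E] [NormedSpace ℝ E]
    {a b : E → ℝ} {a' b' : E →L[ℝ] ℝ} {z : E} (ha : HasFDerivAt a a' z) (hb : HasFDerivAt b b' z) :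
    HasFDerivAt (fun w => a w ^ 3 / 3 + a w * b w ^ 2)
      ((a z ^ 2 + b z ^ 2) • a' + (2 * a z * b z) • b') z := by
  refine (((ha.pow 3).mul_const (3 : ℝ)⁻¹).fun_add (ha.fun_mul (hb.pow 2))).congr_fderiv ?_
  module

namespace PhaseSpace

variable {n m : ℕ}

/-- The differential `duᵢ`, that is, the coordinate `uᵢ` as a continuous linear functional. -/
def du (i : Fin n) : PhaseSpace n m →L[ℝ] ℝ :=
  .proj i ∘L .fst ℝ _ _

/-- The differential `dx`, that is, the coordinate `x` as a continuous linear functional. -/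
def dx : PhaseSpace n m →L[ℝ] ℝ :=
  .fst ℝ _ _ ∘L .snd ℝ _ _

/-- The differential `dy`, that is, the coordinate `y` as a continuous linear functional. -/
def dy : PhaseSpace n m →L[ℝ] ℝ :=
  .fst ℝ _ _ ∘L .snd ℝ _ _ ∘L .snd ℝ _ _

/-- The differential `dpⱼ`, that is, the coordinate `pⱼ` as a continuous linear functional. -/
def dp (j : Fin m) : PhaseSpace n m →L[ℝ] ℝ :=
  .proj j ∘L .fst ℝ _ _ ∘L .snd ℝ _ _ ∘L .snd ℝ _ _ ∘L .snd ℝ _ _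

/-- The differential `dqⱼ`, that is, the coordinate `qⱼ` as a continuous linear functional. -/
def dq (j : Fin m) : PhaseSpace n m →L[ℝ] ℝ :=
  .proj j ∘L .fst ℝ _ _ ∘L .snd ℝ _ _ ∘L .snd ℝ _ _ ∘L .snd ℝ _ _ ∘L .snd ℝ _ _

/-- The coordinate directions `∂/∂x`, `∂/∂uᵢ`, `∂/∂pⱼ`, indexed by the integrals `H`, `uᵢ`, `Fⱼ`
against which they are paired. -/
def pairedDirection : Unit ⊕ Fin n ⊕ Fin m → PhaseSpace n m
  | .inl _ => (0, 1, 0, 0, 0, 0)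
  | .inr (.inl i) => (Pi.single i 1, 0, 0, 0, 0, 0)
  | .inr (.inr j) => (0, 0, 0, Pi.single j 1, 0, 0)

end PhaseSpace

open PhaseSpace

section Differentials

variable {n m : ℕ} (ω : Fin n → ℝ) (z : PhaseSpace n m)

theorem hasFDerivAt_integralFamily_u (i : Fin n) :
    HasFDerivAt (integralFamily n m ω (.inr (.inl i))) (du i) z :=
  (du i).hasFDerivAt

theorem hasFDerivAt_integralFamily_F (j : Fin m) :
    HasFDerivAt (integralFamily n m ω (.inr (.inr j)))
      ((dp j z ^ 2 + dq j z ^ 2) • dp j + (2 * dp j z * dq j z) • dq j) z :=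
  hasFDerivAt_cube_div_three_add_mul_sq (dp j).hasFDerivAt (dq j).hasFDerivAt

theorem hasFDerivAt_integralFamily_H :
    HasFDerivAt (integralFamily n m ω (.inl ()))
      (∑ i, (ω i + 2 * dx z * du i z) • du i
        + (∑ i, du i z ^ 2 + (dx z ^ 2 + dy z ^ 2)) • dx + (2 * dx z * dy z) • dy
        + ∑ j, ((dp j z ^ 2 + dq j z ^ 2) • dp j + (2 * dp j z * dq j z) • dq j)) z := by
  have h_u (i : Fin n) : HasFDerivAt (fun w : PhaseSpace n m => ω i * du i w + dx w * du i w ^ 2)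
      ((ω i + 2 * dx z * du i z) • du i + du i z ^ 2 • dx) z := by
    refine (((du i).hasFDerivAt.const_mul (ω i)).fun_add
      (dx.hasFDerivAt.fun_mul ((du i).hasFDerivAt.pow 2))).congr_fderiv ?_
    module
  have h_xy := hasFDerivAt_cube_div_three_add_mul_sq (z := z) dx.hasFDerivAt dy.hasFDerivAt
  have h_split : integralFamily n m ω (.inl ()) = fun w =>
      ∑ i, (ω i * du i w + dx w * du i w ^ 2) + (dx w ^ 3 / 3 + dx w * dy w ^ 2)
        + ∑ j, integralFamily n m ω (.inr (.inr j)) w := by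
    ext w
    rw [← add_assoc]
    rfl
  rw [h_split]
  refine ((HasFDerivAt.fun_sum fun i _ => h_u i).fun_add h_xy |>.fun_add <|
    HasFDerivAt.fun_sum fun j _ => hasFDerivAt_integralFamily_F ω z j).congr_fderiv ?_
  rw [Finset.sum_add_distrib, ← Finset.sum_smul]
  module

end Differentials

theorem linearIndependent_fderiv_integralFamily {n m : ℕ} (ω : Fin n → ℝ) {z : PhaseSpace n m}
    (h_uxy : ∑ i, du i z ^ 2 + (dx z ^ 2 + dy z ^ 2) ≠ 0)
    (h_pq : ∀ j, dp j z ^ 2 + dq j z ^ 2 ≠ 0) :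
    LinearIndependent ℝ fun a => fderiv ℝ (integralFamily n m ω a) z := by
  refine linearIndependent_of_dual_triangular Sum.isRight _
    (fun a => (ContinuousLinearMap.apply ℝ ℝ (pairedDirection a)).toLinearMap) ?_ ?_
  · rintro (_ | i | j)
    · simpa [(hasFDerivAt_integralFamily_H ω z).fderiv, pairedDirection, du, dx, dy, dp, dq]
        using h_uxy
    · simp [(hasFDerivAt_integralFamily_u ω z i).fderiv, pairedDirection, du]
    · simpa [(hasFDerivAt_integralFamily_F ω z j).fderiv, pairedDirection, dp, dq] using h_pq j
  · rintro a (_ | i | j) hab hrank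
    · rcases a with _ | k
      · exact absurd rfl hab
      · exact absurd hrank Bool.false_lt_true.not_ge
    · rcases a with _ | k | k <;>
        simp_all [(hasFDerivAt_integralFamily_u ω z i).fderiv, pairedDirection, du]
    · rcases a with _ | k | k <;>
        simp_all [(hasFDerivAt_integralFamily_F ω z j).fderiv, pairedDirection, dp, dq]

section Measure

open MeasureTheory Measure

theorem volume_setOf_dx_eq_zero (n m : ℕ) : volume {z : PhaseSpace n m | dx z = 0} = 0 :=
  (quasiMeasurePreserving_fst.comp quasiMeasurePreserving_snd).preimage_null
    (measure_singleton (0 : ℝ))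

theorem volume_setOf_dp_eq_zero (n : ℕ) {m : ℕ} (j : Fin m) :
    volume {z : PhaseSpace n m | dp j z = 0} = 0 := by
  have h_dp : QuasiMeasurePreserving (fun z : PhaseSpace n m => z.2.2.2.1 j) :=
    (quasiMeasurePreserving_eval (fun _ => volume) j).comp <| quasiMeasurePreserving_fst.comp <|
      quasiMeasurePreserving_snd.comp <| quasiMeasurePreserving_snd.comp quasiMeasurePreserving_snd
  exact h_dp.preimage_null (measure_singleton 0)

end Measure

/-- **Functional independence of the first integrals.** At every point
`z = (u, x, y, p, q, φ)` with `(u, x, y) ≠ 0` and `(pⱼ, qⱼ) ≠ (0, 0)` for every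
`j`, the differentials of the n + m + 1 functions `H, u₁, …, uₙ, F₁, …, Fₘ` are
linearly independent; and the exceptional set, where these conditions fail, has
Lebesgue measure zero. -/
theorem integrals_functionally_independent
    (n m : ℕ) (hn : 1 ≤ n) (ω : Fin n → ℝ) :
    (∀ z : PhaseSpace n m,
      ¬(z.1 = 0 ∧ z.2.1 = 0 ∧ z.2.2.1 = 0) →
      (∀ j : Fin m, (z.2.2.2.1 j, z.2.2.2.2.1 j) ≠ (0, 0)) →
      LinearIndependent ℝ
        (fun a : Unit ⊕ Fin n ⊕ Fin m => fderiv ℝ (integralFamily n m ω a) z)) ∧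
    MeasureTheory.volume
      {z : PhaseSpace n m | (z.1 = 0 ∧ z.2.1 = 0 ∧ z.2.2.1 = 0) ∨
        ∃ j : Fin m, (z.2.2.2.1 j, z.2.2.2.2.1 j) = (0, 0)} = 0 := by
  constructor
  · intro z h_uxy h_pq
    apply linearIndependent_fderiv_integralFamily
    · rwa [Ne, add_eq_zero_iff_of_nonneg (by positivity) (by positivity), sum_sq_eq_zero_iff,
        sq_add_sq_eq_zero_iff]
    · intro j
      rw [Ne, sq_add_sq_eq_zero_iff, ← Prod.mk_eq_zero]
      exact h_pq j
  · refine MeasureTheory.measure_mono_null ?_ (MeasureTheory.measure_union_null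
      (volume_setOf_dx_eq_zero n m)
      (MeasureTheory.measure_iUnion_null (volume_setOf_dp_eq_zero n)))
    rintro z (⟨-, hx, -⟩ | ⟨j, h_pq⟩)
    · exact .inl hx
    · exact .inr (Set.mem_iUnion.mpr ⟨j, congrArg Prod.fst h_pq⟩)
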